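/- arXiv:2503.22960 — 2 statements merged into one kernel-verified Lean document; each statement's English description precedes it below -/
import Mathlib

section
/- Let q be an integer with q ≥ 3 and let A ⊂ ℚ be a finite set with #A ≥ 2. Then the following three statements are equivalent: (i) the Hausdorff dimension of K(q,A) is strictly less than 1; (ii) the set K(q,A) has empty interior in ℝ; (iii) for every integer p ≥ 2 with gcd(p,q) = 1, the intersection D_p ∩ K(q,A) is a finite set. -/
open MeasureTheory

/-- The self-similar set `K(q,A) = { ∑_{i=1}^∞ a_i/q^i : a_i ∈ A }`. -/
noncomputable def Kset (q : ℕ) (A : Finset ℚ) : Set ℝ :=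
  { x : ℝ | ∃ a : ℕ → ℚ, (∀ i, a i ∈ A) ∧ x = ∑' i : ℕ, (a i : ℝ) / (q : ℝ) ^ (i + 1) }

/-- The set `D_p = ⋃_{n≥1} ℤ/pⁿ` of rationals with a finite `p`-ary expansion. -/
def Dset (p : ℕ) : Set ℝ :=
  { x : ℝ | ∃ n : ℕ, 1 ≤ n ∧ ∃ m : ℤ, x = (m : ℝ) / (p : ℝ) ^ n }

/-! After multiplying by a common denominator of the digits, `K` becomes a compact set with
`q • x ∈ K + ℤ` for `x ∈ K`, so its image `X` in the circle `ℝ/ℤ` is closed and satisfies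
`q • X ⊆ X`. If `K` has empty interior, then `X` is not the whole circle by Baire, so some power
`b = q ^ m` has the property that `X` meets only `c < b` of the `b` arcs `[j/b, (j+1)/b)`.
By invariance `X` meets at most `c ^ k` arcs of length `b ^ (-k)`, which bounds the dimension of
`K` by `log c / log b < 1`.

The same count controls the points of `X` that are killed by a power of `p` coprime to `q`. Choose
a power `Q ≡ 1 [MOD p]` of `b` (and `Q ≡ 1 [MOD 4]` for even `p`). If `x` has order `d`, then by
lifting the exponent the orbit `Q ^ j • x` has at least `d / (Q - 1)` elements; these lie in `X`
and in distinct arcs of length at most `1 / d`. For `b ^ k ≤ d < b ^ (k + 1)` this gives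
`b ^ k ≤ (Q - 1) * c ^ (k + 1)`, which bounds `k`, hence `d`.

Conversely, a set with nonempty interior has dimension `1` and contains infinitely many points of
the dense set `D_p`. -/

section

open Set Filter
open scoped NNReal ENNReal Pointwise Topology

/-! ### Arithmetic of powers -/

theorem natCast_dvd_sub_one_mul_of_dvd_pow_sub_one {x : ℤ} {d t : ℕ}
    (hprime : ∀ l : ℕ, l.Prime → l ∣ d → (l : ℤ) ∣ x - 1) (hfour : 2 ∣ d → 4 ∣ x - 1)
    (h : (d : ℤ) ∣ x ^ t - 1) : (d : ℤ) ∣ (x - 1) * t := by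
  rw [Int.natCast_dvd, Nat.dvd_iff_prime_pow_dvd_dvd]
  intro l k hl hk
  obtain rfl | hk₀ := eq_or_ne k 0
  · simp
  have hld : l ∣ d := (dvd_pow_self l hk₀).trans hk
  have hlx : ¬ (l : ℤ) ∣ x := fun hlx ↦
    (Nat.prime_iff_prime_int.1 hl).not_dvd_one (by simpa using dvd_sub hlx (hprime l hl hld))
  have hlt : (l : ℤ) ^ k ∣ x ^ t - 1 ^ t := by
    simpa using (Int.natCast_dvd_natCast.2 hk).trans h
  rw [← Int.natCast_dvd, Nat.cast_pow, pow_dvd_iff_le_emultiplicity,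
    emultiplicity_mul (Nat.prime_iff_prime_int.1 hl)]
  rw [pow_dvd_iff_le_emultiplicity] at hlt
  -- Lifting the exponent: `v_l(x ^ t - 1) = v_l(x - 1) + v_l(t)`.
  refine hlt.trans_eq ?_
  obtain rfl | hodd := hl.eq_two_or_odd'
  · exact Int.two_pow_sub_pow' t (hfour hld) hlx
  · rw [Int.emultiplicity_pow_sub_pow hl hodd (hprime l hl hld) hlx, Int.natCast_emultiplicity]

theorem exists_pow_modEq_one_of_coprime {p b : ℕ} (hp : p ≠ 0) (h : p.Coprime b) :
    ∃ r, r ≠ 0 ∧ b ^ r ≡ 1 [MOD p] ∧ (2 ∣ p → b ^ r ≡ 1 [MOD 4]) := by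
  -- The factor `2 = φ(4)` takes care of the congruence modulo `4`.
  refine ⟨p.totient * 2, ?_, ?_, fun h2 ↦ ?_⟩
  · simpa using hp
  · simpa [pow_mul] using (Nat.ModEq.pow_totient h.symm).pow 2
  · have h4 : Nat.Coprime b 4 := (h.symm.coprime_dvd_right h2).pow_right 2
    have htotient : Nat.totient 4 = 2 := by decide
    simpa [htotient, pow_mul'] using (Nat.ModEq.pow_totient h4).pow p.totient

theorem eventually_mul_pow_lt_pow {c b : ℕ} (h : c < b) (C : ℕ) :
    ∀ᶠ k in atTop, C * c ^ k < b ^ k := by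
  have hb : (0 : ℝ) < b := by exact_mod_cast pos_of_gt h
  have hlim : Tendsto (fun k ↦ C * (c / b : ℝ) ^ k) atTop (𝓝 (C * 0)) :=
    (tendsto_pow_atTop_nhds_zero_of_lt_one (by positivity)
      ((div_lt_one hb).2 (by exact_mod_cast h))).const_mul _
  rw [mul_zero] at hlim
  filter_upwards [hlim.eventually_lt_const one_pos] with k hk
  rw [div_pow, ← mul_div_assoc, div_lt_one (by positivity)] at hk
  exact_mod_cast hk

/-! ### Counting arcs of the circle -/

/-- The index `j` of the arc `[j/b, (j+1)/b)` of the circle containing `x`, computed from the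
representative of `x` in `[0, 1)`. -/
noncomputable def cellIndex (b : ℕ) (x : UnitAddCircle) : ℤ :=
  ⌊b * (AddCircle.equivIco 1 0 x : ℝ)⌋

/-- The box-counting number of `X` at scale `1/b`: how many arcs `[j/b, (j+1)/b)`, `0 ≤ j < b`,
meet `X`. -/
noncomputable def cellCount (b : ℕ) (X : Set UnitAddCircle) : ℕ :=
  (cellIndex b '' X).ncard

theorem cellIndex_coe (b : ℕ) (t : ℝ) : cellIndex b t = ⌊b * Int.fract t⌋ := by
  simp [cellIndex, AddCircle.coe_equivIco_mk_apply]

theorem cellIndex_mem_Ico {b : ℕ} (hb : b ≠ 0) (x : UnitAddCircle) :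
    cellIndex b x ∈ Finset.Ico (0 : ℤ) b := by
  obtain ⟨t, rfl⟩ := QuotientAddGroup.mk_surjective x
  have hb' : (0 : ℝ) < b := by positivity
  rw [cellIndex_coe, Finset.mem_Ico, Int.floor_lt]
  refine ⟨Int.floor_nonneg.2 (by positivity), ?_⟩
  exact_mod_cast mul_lt_of_lt_one_right hb' (Int.fract_lt_one t)

theorem cellIndex_mul (b c : ℕ) (x : UnitAddCircle) :
    cellIndex (b * c) x = c * cellIndex b x + cellIndex c (b • x) := by
  obtain ⟨t, rfl⟩ := QuotientAddGroup.mk_surjective x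
  have hfract : Int.fract (b • t) = b * Int.fract t - ⌊b * Int.fract t⌋ := by
    rw [Int.self_sub_floor, Int.fract_eq_fract]
    exact ⟨b * ⌊t⌋, by rw [Int.fract]; push_cast; rw [nsmul_eq_mul]; ring⟩
  rw [← AddCircle.coe_nsmul, cellIndex_coe, cellIndex_coe, cellIndex_coe, hfract,
    ← Int.floor_intCast_add]
  push_cast
  ring_nf

theorem mul_abs_fract_sub_fract_lt_one {b : ℕ} {t u : ℝ}
    (h : cellIndex b t = cellIndex b u) : b * |Int.fract t - Int.fract u| < 1 := by
  rw [cellIndex_coe, cellIndex_coe] at h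
  simpa [← mul_sub, abs_mul] using Int.abs_sub_lt_one_of_floor_eq_floor h

theorem finite_image_cellIndex {b : ℕ} (hb : b ≠ 0) (X : Set UnitAddCircle) :
    (cellIndex b '' X).Finite :=
  (Finset.Ico (0 : ℤ) b).finite_toSet.subset (image_subset_iff.2 fun x _ ↦ cellIndex_mem_Ico hb x)

theorem cellCount_mul_le {b : ℕ} (hb : b ≠ 0) {c : ℕ} (hc : c ≠ 0) {X : Set UnitAddCircle}
    (hX : MapsTo (b • ·) X X) : cellCount (b * c) X ≤ cellCount b X * cellCount c X := by
  have hsub : cellIndex (b * c) '' X ⊆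
      (fun ij : ℤ × ℤ ↦ c * ij.1 + ij.2) '' ((cellIndex b '' X) ×ˢ (cellIndex c '' X)) := by
    rintro _ ⟨x, hx, rfl⟩
    exact ⟨(_, _), ⟨mem_image_of_mem _ hx, mem_image_of_mem _ (hX hx)⟩, (cellIndex_mul b c x).symm⟩
  have hfin := (finite_image_cellIndex hb X).prod (finite_image_cellIndex hc X)
  exact (ncard_le_ncard hsub (hfin.image _)).trans ((ncard_image_le hfin).trans_eq ncard_prod)

theorem cellCount_pow_le {b : ℕ} (hb : b ≠ 0) {X : Set UnitAddCircle}
    (hX : MapsTo (b • ·) X X) (k : ℕ) : cellCount (b ^ k) X ≤ cellCount b X ^ k := by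
  induction k with
  | zero =>
    have hsub : cellIndex 1 '' X ⊆ {0} := by
      rintro _ ⟨x, -, rfl⟩
      have hmem := Finset.mem_Ico.1 (cellIndex_mem_Ico one_ne_zero x)
      rw [mem_singleton_iff]
      lia
    simpa [cellCount] using ncard_le_ncard hsub
  | succ k ih =>
    calc cellCount (b ^ (k + 1)) X
      _ ≤ cellCount b X * cellCount (b ^ k) X := by
        rw [pow_succ']
        exact cellCount_mul_le hb (pow_ne_zero k hb) hX
      _ ≤ cellCount b X ^ (k + 1) := by
        rw [pow_succ']
        gcongr

theorem eventually_cellCount_lt {X : Set UnitAddCircle} (hX : IsClosed X) (hne : X ≠ univ) :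
    ∀ᶠ b : ℕ in atTop, cellCount b X < b := by
  obtain ⟨x, hx⟩ := (ne_univ_iff_exists_notMem X).1 hne
  obtain ⟨t, rfl⟩ := QuotientAddGroup.mk_surjective x
  have hopen : IsOpen {s : ℝ | (s : UnitAddCircle) ∉ X} :=
    hX.isOpen_compl.preimage (AddCircle.continuous_mk' 1)
  obtain ⟨ε, hε, hball⟩ := Metric.isOpen_iff.1 hopen (Int.fract t)
    (by rwa [mem_ofPred_eq, AddCircle.coe_fract])
  filter_upwards [(tendsto_natCast_atTop_atTop.atTop_mul_const hε).eventually_gt_atTop 1,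
    eventually_ne_atTop 0] with b hbε hb
  have hmiss : cellIndex b t ∉ cellIndex b '' X := by
    rintro ⟨y, hy, hyt⟩
    obtain ⟨s, rfl⟩ := QuotientAddGroup.mk_surjective y
    have hclose : |Int.fract s - Int.fract t| < ε :=
      lt_of_mul_lt_mul_left ((mul_abs_fract_sub_fract_lt_one hyt).trans hbε) b.cast_nonneg
    exact hball (Metric.mem_ball.2 hclose) (by rwa [AddCircle.coe_fract])
  have hsub : cellIndex b '' X ⊂ Finset.Ico (0 : ℤ) b :=
    ssubset_iff_exists.2 ⟨image_subset_iff.2 fun x _ ↦ cellIndex_mem_Ico hb x, _,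
      cellIndex_mem_Ico hb _, hmiss⟩
  have hcard := ncard_lt_ncard hsub
  rwa [ncard_coe_finset, Int.card_Ico, sub_zero, Int.toNat_natCast] at hcard

theorem cellIndex_injOn_torsion {d b : ℕ} (hd : d ≠ 0) (hdb : d ≤ b) :
    InjOn (cellIndex b) {x | d • x = 0} := by
  rintro x hx y hy hxy
  obtain ⟨t, rfl⟩ := QuotientAddGroup.mk_surjective x
  obtain ⟨u, rfl⟩ := QuotientAddGroup.mk_surjective y
  have hint (s : ℝ) (hs : d • (s : UnitAddCircle) = 0) : ∃ m : ℤ, d * Int.fract s = m := by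
    rw [← AddCircle.coe_fract, ← AddCircle.coe_nsmul, AddCircle.coe_eq_zero_iff] at hs
    obtain ⟨m, hm⟩ := hs
    exact ⟨m, by simpa using hm.symm⟩
  obtain ⟨m, hm⟩ := hint t hx
  obtain ⟨n, hn⟩ := hint u hy
  have hlt : |((m - n : ℤ) : ℝ)| < 1 :=
    calc |((m - n : ℤ) : ℝ)|
      _ = d * |Int.fract t - Int.fract u| := by
        rw [Int.cast_sub, ← hm, ← hn, ← mul_sub, abs_mul, Nat.abs_cast]
      _ ≤ b * |Int.fract t - Int.fract u| := by gcongr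
      _ < 1 := mul_abs_fract_sub_fract_lt_one hxy
  have hmn : m = n := sub_eq_zero.1 (Int.abs_lt_one_iff.1 (by exact_mod_cast hlt))
  have hd' : (d : ℝ) ≠ 0 := by exact_mod_cast hd
  have hfract : Int.fract t = Int.fract u := mul_left_cancel₀ hd' (by rw [hm, hn, hmn])
  change (t : UnitAddCircle) = u
  rw [← AddCircle.coe_fract, hfract, AddCircle.coe_fract]

/-! ### Torsion points -/

theorem addOrderOf_dvd_sub_one_mul_of_pow_nsmul_eq {G : Type*} [AddLeftCancelMonoid G] {x : G}
    {p n Q i t : ℕ} (hx : p ^ n • x = 0) (hQ : Q ≡ 1 [MOD p]) (hfour : 2 ∣ p → Q ≡ 1 [MOD 4])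
    (h : Q ^ i • x = Q ^ (i + t) • x) : (addOrderOf x : ℤ) ∣ (Q - 1) * t := by
  have hprime {l : ℕ} (hl : l.Prime) (hlx : l ∣ addOrderOf x) : l ∣ p :=
    hl.dvd_of_dvd_pow (hlx.trans (addOrderOf_dvd_of_nsmul_eq_zero hx))
  have hcop : (addOrderOf x).Coprime (Q ^ i) :=
    (Nat.Coprime.pow n i (by rw [Nat.coprime_comm, Nat.Coprime, hQ.gcd_eq, Nat.gcd_one_left])
      ).coprime_dvd_left (addOrderOf_dvd_of_nsmul_eq_zero hx)
  have hpow : 1 ≡ Q ^ t [MOD addOrderOf x] := by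
    rw [nsmul_eq_nsmul_iff_modEq, pow_add] at h
    exact Nat.ModEq.cancel_left_of_coprime hcop (by rwa [mul_one])
  refine natCast_dvd_sub_one_mul_of_dvd_pow_sub_one (fun l hl hlx ↦ ?_) (fun h2 ↦ ?_) ?_
  · exact_mod_cast Nat.modEq_iff_dvd.1 (hQ.of_dvd (hprime hl hlx)).symm
  · exact_mod_cast Nat.modEq_iff_dvd.1 (hfour (hprime Nat.prime_two h2)).symm
  · exact_mod_cast Nat.modEq_iff_dvd.1 hpow

theorem mapsTo_pow_smul {M α : Type*} [Monoid M] [MulAction M α] {a : M} {s : Set α}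
    (h : MapsTo (a • ·) s s) (k : ℕ) : MapsTo (a ^ k • ·) s s := by
  simpa only [smul_iterate] using h.iterate k

theorem addOrderOf_le_mul_cellCount {X : Set UnitAddCircle} {x : UnitAddCircle} {p n Q b : ℕ}
    (hX : MapsTo (Q • ·) X X) (hxX : x ∈ X) (hx : p ^ n • x = 0) (hQ₁ : 1 < Q) (hQ : Q ≡ 1 [MOD p])
    (hfour : 2 ∣ p → Q ≡ 1 [MOD 4]) (hb : addOrderOf x ≤ b) :
    addOrderOf x ≤ (Q - 1) * cellCount b X := by
  obtain hd | hd := (addOrderOf x).eq_zero_or_pos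
  · simp [hd]
  have horbit (j : ℕ) : Q ^ j • x ∈ X := mapsTo_pow_smul hX j hxX
  have htorsion (j : ℕ) : addOrderOf x • Q ^ j • x = 0 := by
    rw [smul_comm, addOrderOf_nsmul_eq_zero, smul_zero]
  obtain ⟨i, j, hj, hij, heq⟩ : ∃ i, ∃ j ∈ Finset.range (cellCount b X + 1),
      i < j ∧ Q ^ i • x = Q ^ j • x := by
    have hfin := finite_image_cellIndex (hd.trans_le hb).ne' X
    obtain ⟨i, hi, j, hj, hne, hcell⟩ := Finset.exists_ne_map_eq_of_card_lt_of_maps_to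
      (s := Finset.range (cellCount b X + 1)) (t := hfin.toFinset)
      (by simp [cellCount, ncard_eq_toFinset_card _ hfin])
      (f := fun j ↦ cellIndex b (Q ^ j • x))
      (fun j _ ↦ hfin.mem_toFinset.2 (mem_image_of_mem _ (horbit j)))
    have heq := cellIndex_injOn_torsion hd.ne' hb (htorsion i) (htorsion j) hcell
    obtain hlt | hlt := hne.lt_or_gt
    · exact ⟨i, j, hj, hlt, heq⟩
    · exact ⟨j, i, hi, hlt, heq.symm⟩
  obtain ⟨t, rfl⟩ := Nat.exists_eq_add_of_lt hij
  have hdvd := addOrderOf_dvd_sub_one_mul_of_pow_nsmul_eq (t := t + 1) hx hQ hfour heq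
  rw [← Nat.cast_pred (zero_lt_one.trans hQ₁), ← Nat.cast_mul, Int.natCast_dvd_natCast] at hdvd
  calc addOrderOf x
    _ ≤ (Q - 1) * (t + 1) := Nat.le_of_dvd (by simp [hQ₁]) hdvd
    _ ≤ (Q - 1) * cellCount b X := by
      gcongr
      have := Finset.mem_range.1 hj
      lia

theorem exists_addOrderOf_mem_Ico_of_cellCount_lt {X : Set UnitAddCircle} {p b : ℕ} (hb : 1 < b)
    (hX : MapsTo (b • ·) X X) (hcount : cellCount b X < b) (hpb : p.Coprime b) :
    ∃ D, ∀ x ∈ X, ∀ n, p ^ n • x = 0 → addOrderOf x ∈ Ico 1 D := by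
  have hp : p ≠ 0 := by
    rintro rfl
    exact hb.ne' (by simpa using hpb)
  obtain ⟨r, hr, hQ, hfour⟩ := exists_pow_modEq_one_of_coprime hp hpb
  obtain ⟨k₀, hk₀⟩ :=
    eventually_atTop.1 (eventually_mul_pow_lt_pow hcount ((b ^ r - 1) * cellCount b X))
  refine ⟨b ^ (k₀ + 1), fun x hxX n hx ↦ ?_⟩
  have hd : 0 < addOrderOf x :=
    addOrderOf_pos_iff.2 (isOfFinAddOrder_iff_nsmul_eq_zero.2 ⟨p ^ n, by positivity, hx⟩)
  obtain ⟨k, hk, hk'⟩ := exists_nat_pow_near hd hb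
  have hle : b ^ k ≤ (b ^ r - 1) * cellCount b X * cellCount b X ^ k :=
    calc b ^ k
      _ ≤ addOrderOf x := hk
      _ ≤ (b ^ r - 1) * cellCount (b ^ (k + 1)) X :=
        addOrderOf_le_mul_cellCount (mapsTo_pow_smul hX r) hxX hx (Nat.one_lt_pow hr hb) hQ hfour
          hk'.le
      _ ≤ (b ^ r - 1) * cellCount b X ^ (k + 1) := by
        gcongr
        exact cellCount_pow_le (zero_lt_one.trans hb).ne' hX (k + 1)
      _ = (b ^ r - 1) * cellCount b X * cellCount b X ^ k := by ring
  have hkk₀ : k < k₀ := by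
    by_contra! hkk₀
    exact hle.not_gt (hk₀ k hkk₀)
  exact ⟨hd, hk'.trans_le (Nat.pow_le_pow_right (zero_lt_one.trans hb) (by lia))⟩

theorem finite_torsion_of_cellCount_lt {X : Set UnitAddCircle} {p b : ℕ} (hb : 1 < b)
    (hX : MapsTo (b • ·) X X) (hcount : cellCount b X < b) (hpb : p.Coprime b) :
    {x ∈ X | ∃ n, p ^ n • x = 0}.Finite := by
  obtain ⟨D, hD⟩ := exists_addOrderOf_mem_Ico_of_cellCount_lt hb hX hcount hpb
  refine ((finite_Ico 1 D).biUnion fun d hd ↦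
    AddCircle.finite_torsion (1 : ℝ) (zero_lt_one.trans_le hd.1)).subset ?_
  rintro x ⟨hxX, n, hx⟩
  exact mem_biUnion (hD x hxX n hx) (addOrderOf_nsmul_eq_zero x)

/-! ### Hausdorff dimension -/

theorem dimH_le_of_card_cover_le {α ι : Type*} [EMetricSpace α] {s : Set α} {r c d : ℝ≥0}
    (hr : r < 1) (hcr : c * r ^ (d : ℝ) ≤ 1) (I : ℕ → Finset ι) (U : ℕ → ι → Set α)
    (hcard : ∀ k, ((I k).card : ℝ≥0) ≤ c ^ k)
    (hdiam : ∀ k, ∀ i ∈ I k, Metric.ediam (U k i) ≤ r ^ k)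
    (hcover : ∀ k, s ⊆ ⋃ i ∈ I k, U k i) : dimH s ≤ d := by
  borelize α
  have hsum (k : ℕ) : ∑ i : I k, Metric.ediam (U k i) ^ (d : ℝ) ≤ 1 :=
    calc ∑ i : I k, Metric.ediam (U k i) ^ (d : ℝ)
      _ ≤ ∑ _i : I k, ((r : ℝ≥0∞) ^ k) ^ (d : ℝ) := by
        gcongr with i
        exact hdiam k i i.2
      _ = (((I k).card * (r ^ k) ^ (d : ℝ) : ℝ≥0) : ℝ≥0∞) := by
        simp [ENNReal.coe_rpow_of_nonneg _ d.coe_nonneg]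
      _ ≤ (((c * r ^ (d : ℝ)) ^ k : ℝ≥0) : ℝ≥0∞) := by
        rw [mul_pow, ← NNReal.rpow_natCast_mul, mul_comm (k : ℝ), NNReal.rpow_mul_natCast]
        gcongr
        exact hcard k
      _ ≤ 1 := by exact_mod_cast pow_le_one₀ zero_le hcr
  have hmeasure : μH[d] s ≤ 1 :=
    calc μH[d] s
      _ ≤ liminf (fun k ↦ ∑ i : I k, Metric.ediam (U k i) ^ (d : ℝ)) atTop :=
        Measure.hausdorffMeasure_le_liminf_sum d s (fun k ↦ (r : ℝ≥0∞) ^ k)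
          (ENNReal.tendsto_pow_atTop_nhds_zero_of_lt_one (by exact_mod_cast hr))
          (fun k (i : I k) ↦ U k i) (.of_forall fun k i ↦ hdiam k i i.2)
          (.of_forall fun k ↦ by simpa only [iUnion_subtype] using hcover k)
      _ ≤ 1 := (liminf_le_liminf (.of_forall hsum)).trans (liminf_const 1).le
  exact dimH_le_of_hausdorffMeasure_ne_top (ne_top_of_le_ne_top ENNReal.one_ne_top hmeasure)

theorem exists_lt_one_le_rpow {a b : ℝ} (hb : b ≠ 0) (hab : a < b) :
    ∃ d : ℝ≥0, d < 1 ∧ a ≤ b ^ (d : ℝ) := by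
  have hev : ∀ᶠ d : ℝ in 𝓝 1, a < b ^ d :=
    (Real.continuous_const_rpow hb).continuousAt.eventually_const_lt (by simpa)
  obtain ⟨d, hd₁, hd, hd₀⟩ := (hev.and (eventually_gt_nhds zero_lt_one)).exists_lt
  exact ⟨⟨d, hd₀.le⟩, hd₁, hd.le⟩

theorem ediam_cell_le {b : ℕ} (hb : b ≠ 0) (n j : ℤ) :
    Metric.ediam {t : ℝ | ⌊t⌋ = n ∧ cellIndex b t = j} ≤ (b : ℝ≥0∞)⁻¹ := by
  have hb₀ : (0 : ℝ) < b := by positivity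
  rw [← ENNReal.ofReal_natCast, ← ENNReal.ofReal_inv_of_pos hb₀]
  refine Metric.ediam_le_of_forall_dist_le ?_
  rintro t ⟨htn, htj⟩ u ⟨hun, huj⟩
  have hlt := mul_abs_fract_sub_fract_lt_one (htj.trans huj.symm)
  rw [Int.fract, Int.fract, htn, hun, sub_sub_sub_cancel_right] at hlt
  rw [Real.dist_eq, ← one_div, le_div_iff₀' hb₀]
  exact hlt.le

theorem dimH_preimage_coe_lt_one {X : Set UnitAddCircle} {b : ℕ} (hb : 1 < b)
    (hX : MapsTo (b • ·) X X) (hcount : cellCount b X < b) :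
    dimH ((↑) ⁻¹' X : Set ℝ) < 1 := by
  have hb₀ : b ≠ 0 := (zero_lt_one.trans hb).ne'
  obtain ⟨d, hd, hbd⟩ := exists_lt_one_le_rpow (a := cellCount b X) (b := b)
    (by exact_mod_cast hb₀) (by exact_mod_cast hcount)
  have hunion : ((↑) ⁻¹' X : Set ℝ) = ⋃ n : ℤ, {t : ℝ | ⌊t⌋ = n ∧ (t : UnitAddCircle) ∈ X} := by
    ext t
    simp
  suffices h : ∀ n : ℤ, dimH {t : ℝ | ⌊t⌋ = n ∧ (t : UnitAddCircle) ∈ X} ≤ d by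
    rw [hunion, dimH_iUnion]
    exact (iSup_le h).trans_lt (by exact_mod_cast hd)
  intro n
  have hfin (k : ℕ) := finite_image_cellIndex (pow_ne_zero k hb₀) X
  refine dimH_le_of_card_cover_le (r := (b : ℝ≥0)⁻¹) (c := cellCount b X)
    (I := fun k ↦ (hfin k).toFinset) (U := fun k j ↦ {t : ℝ | ⌊t⌋ = n ∧ cellIndex (b ^ k) t = j})
    (inv_lt_one_of_one_lt₀ (by exact_mod_cast hb)) ?_ (fun k ↦ ?_) (fun k j _ ↦ ?_) (fun k ↦ ?_)
  · rw [NNReal.inv_rpow, ← div_eq_mul_inv]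
    exact div_le_one_of_le₀ (by exact_mod_cast hbd) zero_le
  · rw [← ncard_eq_toFinset_card _ (hfin k)]
    exact_mod_cast cellCount_pow_le hb₀ hX k
  · rw [ENNReal.coe_inv (by exact_mod_cast hb₀), ← ENNReal.inv_pow]
    exact_mod_cast ediam_cell_le (pow_ne_zero k hb₀) n j
  · rintro t ⟨htn, htX⟩
    exact mem_biUnion ((hfin k).mem_toFinset.2 (mem_image_of_mem _ htX)) ⟨htn, rfl⟩

/-! ### Sets invariant modulo `1` -/

theorem image_coe_ne_univ_of_interior_eq_empty {K : Set ℝ} (hK : IsClosed K)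
    (hint : interior K = ∅) : ((↑) '' K : Set UnitAddCircle) ≠ univ := by
  intro huniv
  have hcover : ⋃ n : ℤ, Homeomorph.addRight (n : ℝ) ⁻¹' K = univ := by
    refine eq_univ_of_forall fun t ↦ ?_
    obtain ⟨s, hs, hst⟩ := huniv.ge (mem_univ (t : UnitAddCircle))
    obtain ⟨n, hn⟩ := (AddCircle.coe_eq_zero_iff (1 : ℝ)).1 (sub_eq_zero.2 hst)
    refine mem_iUnion.2 ⟨n, ?_⟩
    have hst' : s = t + n := by
      rw [zsmul_one] at hn
      linarith
    simpa [← hst'] using hs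
  obtain ⟨n, hn⟩ := nonempty_interior_of_iUnion_of_closed
    (fun n : ℤ ↦ hK.preimage (Homeomorph.addRight (n : ℝ)).continuous) hcover
  rw [← Homeomorph.preimage_interior, hint] at hn
  exact not_nonempty_empty hn

theorem finite_inter_preimage_of_isCoveringMap {E B : Type*} [TopologicalSpace E]
    [TopologicalSpace B] [T1Space B] {f : E → B} (hf : IsCoveringMap f) {K : Set E}
    (hK : IsCompact K) {S : Set B} (hS : S.Finite) : (K ∩ f ⁻¹' S).Finite := by
  have hdiscrete : IsDiscrete (f ⁻¹' S) :=
    hS.isDiscrete.preimage' hf.continuous.continuousOn fun x ↦ ⟨(hf x).discreteTopology_fiber⟩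
  exact (hK.inter_right (hS.isClosed.preimage hf.continuous)).finite
    (hdiscrete.mono inter_subset_right)

theorem dense_Dset {p : ℕ} (hp : 1 < p) : Dense (Dset p) := by
  refine dense_of_exists_between fun x y hxy ↦ ?_
  obtain ⟨n, hn⟩ := pow_unbounded_of_one_lt (y - x)⁻¹ (Nat.one_lt_cast (α := ℝ).2 hp)
  have hn' : (y - x)⁻¹ < (p ^ (n + 1) : ℕ) := by
    push_cast
    exact hn.trans (pow_lt_pow_right₀ (Nat.one_lt_cast.2 hp) n.lt_succ_self)
  obtain ⟨m, hxm, hmy⟩ := exists_div_btwn hxy hn'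
  exact ⟨_, ⟨n + 1, n.succ_pos, m, by push_cast; rfl⟩, hxm, hmy⟩

theorem infinite_inter_of_dense {α : Type*} [TopologicalSpace α] [T1Space α] [PerfectSpace α]
    {s t : Set α} (hs : Dense s) (ht : (interior t).Nonempty) : (s ∩ t).Infinite := by
  intro hfin
  obtain ⟨x, hx⟩ := ht
  have hsub : interior t ⊆ s ∩ t :=
    calc interior t
      _ ⊆ closure (interior t ∩ s) := hs.open_subset_closure_inter isOpen_interior
      _ ⊆ closure (s ∩ t) := closure_mono fun y hy ↦ ⟨hy.2, interior_subset hy.1⟩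
      _ = s ∩ t := hfin.isClosed.closure_eq
  exact infinite_of_mem_nhds x (isOpen_interior.mem_nhds hx) (hfin.subset hsub)

theorem exists_pow_nsmul_coe_eq_zero {p : ℕ} (hp : p ≠ 0) {t : ℝ} (ht : t ∈ Dset p) :
    ∃ n, p ^ n • (t : UnitAddCircle) = 0 := by
  obtain ⟨n, -, m, rfl⟩ := ht
  have hp' : (p : ℝ) ≠ 0 := by exact_mod_cast hp
  refine ⟨n, ?_⟩
  rw [← AddCircle.coe_nsmul, AddCircle.coe_eq_zero_iff]
  exact ⟨m, by rw [zsmul_one, nsmul_eq_mul, Nat.cast_pow, mul_div_cancel₀ _ (pow_ne_zero n hp')]⟩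

theorem exists_pow_cellCount_image_coe_lt {K : Set ℝ} (hK : IsCompact K) (hint : interior K = ∅)
    {q : ℕ} (hq : 1 < q) :
    ∃ m, 1 < q ^ m ∧ cellCount (q ^ m) ((↑) '' K) < q ^ m := by
  have hX : IsClosed ((↑) '' K : Set UnitAddCircle) :=
    (hK.image (AddCircle.continuous_mk' 1)).isClosed
  have hne := image_coe_ne_univ_of_interior_eq_empty hK.isClosed hint
  exact ((tendsto_pow_atTop_atTop_of_one_lt hq).eventually ((eventually_gt_atTop 1).and
    (eventually_cellCount_lt hX hne))).exists

theorem mapsTo_nsmul_image_coe {K : Set ℝ} {q : ℕ} (hinv : ∀ x ∈ K, ∃ s : ℤ, q * x - s ∈ K) :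
    MapsTo (q • ·) ((↑) '' K : Set UnitAddCircle) ((↑) '' K) := by
  rintro _ ⟨x, hx, rfl⟩
  obtain ⟨s, hs⟩ := hinv x hx
  exact ⟨_, hs, by simp⟩

theorem dimH_lt_one_of_interior_eq_empty {K : Set ℝ} (hK : IsCompact K) {q : ℕ} (hq : 1 < q)
    (hinv : ∀ x ∈ K, ∃ s : ℤ, q * x - s ∈ K) (hint : interior K = ∅) : dimH K < 1 := by
  obtain ⟨m, hm, hcount⟩ := exists_pow_cellCount_image_coe_lt hK hint hq
  exact (dimH_mono (subset_preimage_image _ K)).trans_lt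
    (dimH_preimage_coe_lt_one hm (mapsTo_pow_smul (mapsTo_nsmul_image_coe hinv) m) hcount)

theorem finite_Dset_inter_of_interior_eq_empty {K : Set ℝ} (hK : IsCompact K) {q : ℕ} (hq : 1 < q)
    (hinv : ∀ x ∈ K, ∃ s : ℤ, q * x - s ∈ K) (hint : interior K = ∅) {p : ℕ} (hp : p ≠ 0)
    (hpq : p.Coprime q) : (Dset p ∩ K).Finite := by
  obtain ⟨m, hm, hcount⟩ := exists_pow_cellCount_image_coe_lt hK hint hq
  have hfin := finite_torsion_of_cellCount_lt hm
    (mapsTo_pow_smul (mapsTo_nsmul_image_coe hinv) m) hcount (hpq.pow_right m)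
  refine (finite_inter_preimage_of_isCoveringMap (AddCircle.isCoveringMap_coe 1) hK hfin).subset ?_
  rintro x ⟨hxp, hxK⟩
  exact ⟨hxK, mem_image_of_mem _ hxK, exists_pow_nsmul_coe_eq_zero hp hxp⟩

theorem dimH_smul₀ {𝕜 E : Type*} [NontriviallyNormedField 𝕜] [NormedAddCommGroup E]
    [NormedSpace 𝕜 E] {c : 𝕜} (hc : c ≠ 0) (s : Set E) : dimH (c • s) = dimH s :=
  (ContinuousLinearEquiv.smulLeft (M₁ := E) (R₁ := 𝕜) (Units.mk0 c hc)).dimH_image s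

theorem smul_Dset_inter_subset (n : ℤ) (p : ℕ) (K : Set ℝ) :
    (n : ℝ) • (Dset p ∩ K) ⊆ Dset p ∩ (n : ℝ) • K := by
  rintro _ ⟨x, ⟨⟨k, hk, m, rfl⟩, hxK⟩, rfl⟩
  exact ⟨⟨k, hk, n * m, by simp [mul_div_assoc]⟩, smul_mem_smul_set hxK⟩

theorem rational_points_equivalence_general {K : Set ℝ} (hK : IsCompact K) {q : ℕ} (hq : 1 < q)
    {N : ℤ} (hN : N ≠ 0) (hinv : ∀ x ∈ K, ∃ s : ℤ, q * x - s / N ∈ K) :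
    (dimH K < 1 ↔ interior K = ∅) ∧
      (interior K = ∅ ↔ ∀ p : ℕ, 2 ≤ p → p.Coprime q → (Dset p ∩ K).Finite) := by
  have hN' : (N : ℝ) ≠ 0 := Int.cast_ne_zero.2 hN
  have hNK : IsCompact ((N : ℝ) • K) := hK.smul _
  have hinvN : ∀ x ∈ (N : ℝ) • K, ∃ s : ℤ, q * x - s ∈ (N : ℝ) • K := by
    rintro _ ⟨x, hx, rfl⟩
    obtain ⟨s, hs⟩ := hinv x hx
    exact ⟨s, _, hs, by simp only [smul_eq_mul]; field_simp⟩
  have hintN (hint : interior K = ∅) : interior ((N : ℝ) • K) = ∅ := by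
    rw [interior_smul₀ hN', hint, smul_set_empty]
  refine ⟨⟨fun hdim ↦ ?_, fun hint ↦ ?_⟩, fun hint p hp hpq ↦ ?_, fun hfin ↦ ?_⟩
  · by_contra! hne
    exact hdim.ne (by simpa using Real.dimH_of_nonempty_interior hne)
  · rw [← dimH_smul₀ hN']
    exact dimH_lt_one_of_interior_eq_empty hNK hq hinvN (hintN hint)
  · refine Finite.of_finite_image ?_ (smul_right_injective ℝ hN').injOn
    exact (finite_Dset_inter_of_interior_eq_empty hNK hq hinvN (hintN hint) (by lia) hpq).subset
      (smul_Dset_inter_subset N p K)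
  · by_contra! hne
    exact infinite_inter_of_dense (dense_Dset (by lia)) hne (hfin (q + 1) (by lia) (by simp))

/-! ### Self-similar sets -/

theorem exists_summable_norm_div_pow_le {q : ℕ} (hq : 1 < q) (A : Finset ℚ) :
    ∃ u : ℕ → ℝ, Summable u ∧ ∀ a ∈ A, ∀ i, ‖(a : ℝ) / (q : ℝ) ^ (i + 1)‖ ≤ u i := by
  refine ⟨fun i ↦ (∑ b ∈ A, |(b : ℝ)|) * (q : ℝ)⁻¹ ^ (i + 1), Summable.mul_left _ ?_,
    fun a ha i ↦ ?_⟩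
  · exact (summable_nat_add_iff 1).2 (summable_geometric_of_lt_one (by positivity)
      (inv_lt_one_of_one_lt₀ (Nat.one_lt_cast.2 hq)))
  · rw [norm_div, norm_pow, Real.norm_natCast, div_eq_mul_inv, ← inv_pow, Real.norm_eq_abs]
    exact mul_le_mul_of_nonneg_right
      (Finset.single_le_sum (f := fun b : ℚ ↦ |(b : ℝ)|) (fun _ _ ↦ abs_nonneg _) ha)
      (by positivity)

theorem isCompact_Kset {q : ℕ} (hq : 1 < q) (A : Finset ℚ) : IsCompact (Kset q A) := by
  obtain ⟨u, hu, hbound⟩ := exists_summable_norm_div_pow_le hq A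
  have hcont : Continuous fun a : ℕ → A ↦ ∑' i, ((a i : ℚ) : ℝ) / (q : ℝ) ^ (i + 1) :=
    continuous_tsum (fun i ↦ (Rat.continuous_coe_real.comp
      (continuous_subtype_val.comp (continuous_apply i))).div_const _) hu
      fun i a ↦ hbound _ (a i).2 i
  have hrange : Kset q A = range fun a : ℕ → A ↦ ∑' i, ((a i : ℚ) : ℝ) / (q : ℝ) ^ (i + 1) := by
    refine Subset.antisymm ?_ (range_subset_iff.2 fun a ↦ ⟨_, fun i ↦ (a i).2, rfl⟩)
    rintro _ ⟨a, ha, rfl⟩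
    exact ⟨fun i ↦ ⟨a i, ha i⟩, rfl⟩
  exact hrange ▸ isCompact_range hcont

theorem exists_mul_sub_mem_Kset {q : ℕ} (hq : 1 < q) {A : Finset ℚ} {x : ℝ} (hx : x ∈ Kset q A) :
    ∃ a ∈ A, q * x - a ∈ Kset q A := by
  obtain ⟨a, ha, rfl⟩ := hx
  obtain ⟨u, hu, hbound⟩ := exists_summable_norm_div_pow_le hq A
  have hq₀ : (q : ℝ) ≠ 0 := by positivity
  refine ⟨a 0, ha 0, fun i ↦ a (i + 1), fun i ↦ ha (i + 1), ?_⟩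
  have hsum : Summable fun i ↦ (a i : ℝ) / (q : ℝ) ^ (i + 1) :=
    .of_norm_bounded hu fun i ↦ hbound _ (ha i) i
  rw [hsum.tsum_eq_zero_add, mul_add, zero_add, pow_one, mul_div_cancel₀ _ hq₀,
    add_sub_cancel_left, ← tsum_mul_left]
  exact tsum_congr fun i ↦ by field_simp; ring

theorem exists_intCast_div_mem_Kset {q : ℕ} (hq : 1 < q) (A : Finset ℚ) :
    ∃ N : ℤ, N ≠ 0 ∧ ∀ x ∈ Kset q A, ∃ s : ℤ, q * x - s / N ∈ Kset q A := by
  obtain ⟨⟨N, hN⟩, hNA⟩ :=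
    IsLocalization.exist_integer_multiples_of_finset (nonZeroDivisors ℤ) A
  have hN₀ : N ≠ 0 := nonZeroDivisors.ne_zero hN
  refine ⟨N, hN₀, fun x hx ↦ ?_⟩
  obtain ⟨a, ha, hax⟩ := exists_mul_sub_mem_Kset hq hx
  obtain ⟨s, hs⟩ := hNA a ha
  have hs' : (s : ℝ) = N * a := by
    have h : (s : ℚ) = N * a := by simpa using hs
    exact_mod_cast h
  refine ⟨s, ?_⟩
  rwa [hs', mul_div_cancel_left₀ _ (Int.cast_ne_zero.2 hN₀)]

end

theorem rational_points_equivalence (q : ℕ) (hq : 3 ≤ q) (A : Finset ℚ) (hA : 2 ≤ A.card) :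
    (dimH (Kset q A) < 1 ↔ interior (Kset q A) = ∅) ∧
    (interior (Kset q A) = ∅ ↔
      ∀ p : ℕ, 2 ≤ p → Nat.Coprime p q → (Dset p ∩ Kset q A).Finite) := by
  have hq₁ : 1 < q := by lia
  obtain ⟨N, hN, hinv⟩ := exists_intCast_div_mem_Kset hq₁ A
  exact rational_points_equivalence_general (isCompact_Kset hq₁ A) hq₁ hN hinv
end

section
/- Let q be an integer with q ≥ 3 and let A ⊂ ℚ be a finite set with #A ≥ 2 such that the difference set A − A = {a − a' : a, a' ∈ A} has cardinality strictly less than q. Then for every integer p ≥ 2 with gcd(p,q) = 1, the quantity sup_{α ∈ ℝ} #((D_p + α) ∩ K(q,A)) is finite; that is, there is a uniform finite upper bound on #((D_p + α) ∩ K(q,A)) over all real translations α. -/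
open MeasureTheory Pointwise

/-!
Two points of `(D_p + α) ∩ K(q, A)` differ by a point of `D_p ∩ K(q, A - A)`, so it suffices that
`D_p ∩ K(q, B)` is finite whenever `#B < q`. Clear denominators so that `B ⊆ ℤ`, and let `r` be in
this set, with reduced denominator `d`. The `k`-th digit shift of the expansion of `r` is an integer
over `d` congruent to `qᵏ r` modulo `1`, so the shifts take at least `orderOf (q : ZMod d)` distinct
values; by lifting the exponent this is at least `d / R` with `R` independent of `d ∣ pⁿ`.
On the other hand the shifts lie in `(1/d)ℤ`, so once `q ^ N` exceeds a constant times `d` each of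
them is determined by its first `N` digits, which leaves at most `#B ^ N ≈ d ^ (log #B / log q)`
values. As `#B < q`, this bounds `d`, and `K(q, B)` is bounded.
-/

lemma finite_and_ncard_le_of_sub_subset {G : Type*} [AddGroup G] {S F : Set G} (hF : F.Finite)
    (hSF : S - S ⊆ F) : S.Finite ∧ S.ncard ≤ F.ncard := by
  rcases S.eq_empty_or_nonempty with rfl | ⟨x₀, hx₀⟩
  · simp
  have hmaps : Set.MapsTo (· - x₀) S F := fun x hx => hSF (Set.sub_mem_sub hx hx₀)
  have hinj : Set.InjOn (· - x₀) S := sub_left_injective.injOn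
  exact ⟨.of_injOn hmaps hinj hF, Set.ncard_le_ncard_of_injOn _ hmaps hinj hF⟩

lemma exists_forall_abs_ratCast_le (A : Finset ℚ) : ∃ C : ℝ, ∀ z ∈ A, |(z : ℝ)| ≤ C := by
  obtain ⟨C, hC⟩ := (A.image fun z : ℚ => |(z : ℝ)|).exists_le
  exact ⟨C, fun z hz => hC _ (Finset.mem_image_of_mem _ hz)⟩

lemma finite_setOf_den_le_abs_le (D : ℕ) (C : ℝ) : {r : ℚ | r.den ≤ D ∧ |(r : ℝ)| ≤ C}.Finite := by
  refine Set.Finite.of_injOn (f := fun r : ℚ => (r.num, r.den))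
    (t := Set.Icc (-⌊C * D⌋) ⌊C * D⌋ ×ˢ Set.Iic D) ?_
    (fun r _ r' _ h => Rat.ext (congrArg Prod.fst h) (congrArg Prod.snd h))
    ((Set.finite_Icc _ _).prod (Set.finite_Iic D))
  rintro r ⟨hD, hC⟩
  refine ⟨abs_le.mp (Int.le_floor.mpr ?_), hD⟩
  have hnum : (r.num : ℝ) = r * r.den := mod_cast (Rat.mul_den_eq_num r).symm
  rw [Int.cast_abs, hnum, abs_mul, Nat.abs_cast]
  have := (abs_nonneg _).trans hC
  gcongr

lemma exists_ne_zero_image_intCast_eq_smul (A : Finset ℚ) :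
    ∃ c : ℤ, c ≠ 0 ∧ ∃ B : Finset ℤ, B.image (↑) = (c : ℚ) • A := by
  obtain ⟨c, hc⟩ := IsLocalization.exist_integer_multiples_of_finset (nonZeroDivisors ℤ) A
  refine ⟨c, nonZeroDivisors.coe_ne_zero c, (A.image fun a => ((c : ℤ) * a : ℚ).num), ?_⟩
  rw [Finset.image_image]
  refine Finset.image_congr fun a ha => ?_
  obtain ⟨z, hz⟩ := hc a ha
  have hz' : (z : ℚ) = (c : ℤ) * a := by simpa [Submonoid.smul_def] using hz
  simp [← hz']

section Arithmetic

variable {x : ℤ} {d n p q t : ℕ}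

lemma emultiplicity_pow_sub_one {l : ℕ} (hl : l.Prime) (hx : (l : ℤ) ^ 2 ∣ x - 1) (t : ℕ) :
    emultiplicity (l : ℤ) (x ^ t - 1) =
      emultiplicity (l : ℤ) (x - 1) + emultiplicity (l : ℤ) (t : ℤ) := by
  have hlx : (l : ℤ) ∣ x - 1 := (dvd_pow_self _ two_ne_zero).trans hx
  have hlx' : ¬(l : ℤ) ∣ x := fun h =>
    (Nat.prime_iff_prime_int.mp hl).not_dvd_one (by simpa using dvd_sub h hlx)
  rcases hl.eq_two_or_odd' with rfl | hodd
  · simpa using Int.two_pow_sub_pow' (y := 1) t (by simpa using hx) (by simpa using hlx')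
  · simpa [Int.natCast_emultiplicity] using Int.emultiplicity_pow_sub_pow hl hodd hlx hlx' t

lemma dvd_sub_one_mul_of_dvd_pow_sub_one (hx : ∀ l : ℕ, l.Prime → l ∣ d → (l : ℤ) ^ 2 ∣ x - 1)
    (h : (d : ℤ) ∣ x ^ t - 1) : (d : ℤ) ∣ (x - 1) * t := by
  rw [Int.natCast_dvd, Nat.dvd_iff_prime_pow_dvd_dvd]
  intro l k hl hlk
  rcases Nat.eq_zero_or_pos k with rfl | hk
  · simp
  have hld : l ∣ d := (dvd_pow_self l hk.ne').trans hlk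
  have hlk' : (l : ℤ) ^ k ∣ x ^ t - 1 := dvd_trans (mod_cast hlk) h
  rw [← Int.natCast_dvd, Nat.cast_pow, pow_dvd_iff_le_emultiplicity,
    emultiplicity_mul (Nat.prime_iff_prime_int.mp hl), ← emultiplicity_pow_sub_one hl (hx l hl hld)]
  exact le_emultiplicity_of_pow_dvd hlk'

lemma le_mul_orderOf_of_dvd_pow (hq : 1 < q) (hpq : p.Coprime q) (hd : d ∣ p ^ n) :
    d ≤ (q ^ (p ^ 2).totient - 1) * orderOf (q : ZMod d) := by
  have hp : 0 < p := Nat.pos_of_ne_zero (by rintro rfl; simp at hpq; omega)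
  have : NeZero d := ⟨ne_zero_of_dvd_ne_zero (pow_pos hp n).ne' hd⟩
  set m := (p ^ 2).totient
  set t := orderOf (q : ZMod d)
  have hm : m ≠ 0 := (Nat.totient_pos.mpr (pow_pos hp 2)).ne'
  have hqm : 1 < q ^ m := Nat.one_lt_pow hm hq
  have ht : 0 < t := by
    have hqd : q.Coprime d := (Nat.Coprime.coprime_dvd_left hd (hpq.pow_left n)).symm
    rw [show t = orderOf (ZMod.unitOfCoprime q hqd) by
      rw [← orderOf_units, ZMod.coe_unitOfCoprime]]
    exact orderOf_pos _
  have hpm : (p : ℤ) ^ 2 ∣ (q : ℤ) ^ m - 1 := by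
    simpa using (Nat.ModEq.pow_totient (hpq.symm.pow_right 2)).symm.dvd
  have hdt : (d : ℤ) ∣ ((q : ℤ) ^ m) ^ t - 1 := by
    rw [← ZMod.intCast_zmod_eq_zero_iff_dvd]
    push_cast
    rw [pow_right_comm, pow_orderOf_eq_one, one_pow, sub_self]
  have hdvd : (d : ℤ) ∣ ((q : ℤ) ^ m - 1) * t :=
    dvd_sub_one_mul_of_dvd_pow_sub_one (fun l hl hld =>
      (pow_dvd_pow_of_dvd (mod_cast hl.dvd_of_dvd_pow (hld.trans hd)) 2).trans hpm) hdt
  have hdvd' : d ∣ (q ^ m - 1) * t := by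
    zify [hqm.le]
    exact hdvd
  exact Nat.le_of_dvd (Nat.mul_pos (Nat.sub_pos_of_lt hqm) ht) hdvd'

end Arithmetic

section Growth

open Filter Asymptotics

variable {s q : ℕ}

lemma eventually_mul_pow_lt_pow_s5 (hsq : s < q) (L : ℕ) : ∀ᶠ N : ℕ in atTop, L * s ^ N < q ^ N := by
  have hsq' : (s : ℝ) < q := mod_cast hsq
  have hq : (0 : ℝ) < q := s.cast_nonneg.trans_lt hsq'
  filter_upwards [(isLittleO_pow_pow_of_lt_left s.cast_nonneg hsq').def
    (c := 1 / (L + 1)) (by positivity)] with N hN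
  have hqN : (0 : ℝ) < (q : ℝ) ^ N := pow_pos hq N
  have hle : (L + 1) * (s : ℝ) ^ N ≤ (q : ℝ) ^ N := by
    rwa [norm_pow, norm_pow, RCLike.norm_natCast, RCLike.norm_natCast, one_div,
      le_inv_mul_iff₀ (by positivity)] at hN
  have : (L : ℝ) * (s : ℝ) ^ N < (q : ℝ) ^ N := by
    nlinarith [show (0 : ℝ) ≤ (s : ℝ) ^ N by positivity]
  exact_mod_cast this

lemma exists_forall_le_of_forall_le_mul_pow (hq : 1 < q) (hsq : s < q) {L : ℕ} (hL : 0 < L)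
    (R : ℕ) : ∃ D : ℕ, ∀ d : ℕ, (∀ N, L * d < q ^ N → d ≤ R * s ^ N) → d ≤ D := by
  obtain ⟨N₀, hN₀⟩ := eventually_atTop.mp (eventually_mul_pow_lt_pow_s5 hsq (q * L * R))
  refine ⟨q ^ N₀, fun d hd => ?_⟩
  by_contra! hlt
  have hdL : d ≤ L * d := Nat.le_mul_of_pos_left d hL
  set k := Nat.log q (L * d)
  have hlower : q ^ k ≤ L * d := Nat.pow_log_le_self q (by omega)
  have hupper : L * d < q ^ (k + 1) := Nat.lt_pow_succ_log_self hq _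
  have hk : N₀ ≤ k + 1 :=
    ((Nat.pow_lt_pow_iff_right hq).mp ((hlt.trans_le hdL).trans hupper)).le
  have : q ^ (k + 1) < q ^ (k + 1) := calc
    q ^ (k + 1) = q * q ^ k := pow_succ' q k
    _ ≤ q * (L * (R * s ^ (k + 1))) := by
      gcongr
      exact hlower.trans (Nat.mul_le_mul_left L (hd _ hupper))
    _ = q * L * R * s ^ (k + 1) := by ring
    _ < q ^ (k + 1) := hN₀ _ hk
  exact this.false

end Growth

/-- The number `0.a₀a₁a₂…` in base `q` with arbitrary real digits; the points of `Kset q A` are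
those with digits in `A`. Digits are indexed from `0`, so that `a i` has weight `q⁻⁽ⁱ⁺¹⁾`. -/
noncomputable def radixSum (q : ℝ) (a : ℕ → ℝ) : ℝ := ∑' i, a i / q ^ (i + 1)

section RadixSum

variable {q C : ℝ} {a b : ℕ → ℝ}

lemma hasSum_div_pow_succ (hq : 1 < q) (C : ℝ) :
    HasSum (fun i : ℕ => C / q ^ (i + 1)) (C / (q - 1)) := by
  have hq₀ : 0 < q := one_pos.trans hq
  have hq₁ : q - 1 ≠ 0 := (sub_pos.mpr hq).ne'
  have hterm : ∀ i : ℕ, C / q ^ (i + 1) = C / q * q⁻¹ ^ i := fun i => by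
    rw [inv_pow, pow_succ', div_mul_eq_div_div, div_eq_mul_inv (C / q)]
  have hvalue : C / (q - 1) = C / q * (1 - q⁻¹)⁻¹ := by
    rw [show 1 - q⁻¹ = (q - 1) / q by field_simp]
    field_simp
  simp only [hterm, hvalue]
  exact (hasSum_geometric_of_lt_one (inv_nonneg.mpr hq₀.le) (inv_lt_one_of_one_lt₀ hq)).mul_left _

lemma norm_div_pow_succ_le (hq : 0 < q) (ha : ∀ i, |a i| ≤ C) (i : ℕ) :
    ‖a i / q ^ (i + 1)‖ ≤ C / q ^ (i + 1) := by
  rw [norm_div, norm_pow, Real.norm_eq_abs, Real.norm_of_nonneg hq.le]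
  gcongr
  exact ha i

lemma summable_div_pow_succ (hq : 1 < q) (ha : ∀ i, |a i| ≤ C) :
    Summable fun i => a i / q ^ (i + 1) :=
  .of_norm_bounded (hasSum_div_pow_succ hq C).summable (norm_div_pow_succ_le (one_pos.trans hq) ha)

lemma abs_radixSum_le (hq : 1 < q) (ha : ∀ i, |a i| ≤ C) : |radixSum q a| ≤ C / (q - 1) :=
  tsum_of_norm_bounded (hasSum_div_pow_succ hq C) (norm_div_pow_succ_le (one_pos.trans hq) ha)

lemma radixSum_sub {Ca Cb : ℝ} (hq : 1 < q) (ha : ∀ i, |a i| ≤ Ca) (hb : ∀ i, |b i| ≤ Cb) :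
    radixSum q (fun i => a i - b i) = radixSum q a - radixSum q b := by
  simp only [radixSum, sub_div]
  exact (summable_div_pow_succ hq ha).tsum_sub (summable_div_pow_succ hq hb)

lemma radixSum_const_mul (q c : ℝ) (a : ℕ → ℝ) :
    radixSum q (fun i => c * a i) = c * radixSum q a := by
  simp only [radixSum, mul_div_assoc, tsum_mul_left]

lemma pow_mul_radixSum (hq : 1 < q) (ha : ∀ i, |a i| ≤ C) (k : ℕ) :
    q ^ k * radixSum q a =
      ∑ i ∈ Finset.range k, a i * q ^ (k - 1 - i) + radixSum q fun i => a (i + k) := by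
  have : q ≠ 0 := (one_pos.trans hq).ne'
  rw [radixSum, ← (summable_div_pow_succ hq ha).sum_add_tsum_nat_add k, mul_add, Finset.mul_sum,
    radixSum, ← tsum_mul_left]
  congr 1
  · refine Finset.sum_congr rfl fun i hi => ?_
    have hk : k = k - 1 - i + (i + 1) := by have := Finset.mem_range.mp hi; omega
    conv_lhs => rw [hk, pow_add]
    field_simp
  · refine tsum_congr fun i => ?_
    rw [add_right_comm i k 1, pow_add]
    field_simp

lemma pow_mul_abs_radixSum_sub_le (hq : 1 < q) (ha : ∀ i, |a i| ≤ C)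
    (hb : ∀ i, |b i| ≤ C) {N : ℕ} (hab : ∀ i < N, a i = b i) :
    q ^ N * |radixSum q a - radixSum q b| ≤ 2 * C / (q - 1) := by
  have hsub : ∀ i, |a i - b i| ≤ 2 * C := fun i => by
    linarith [abs_sub (a i) (b i), ha i, hb i]
  have hzero : ∑ i ∈ Finset.range N, (a i - b i) * q ^ (N - 1 - i) = 0 :=
    Finset.sum_eq_zero fun i hi => by rw [hab i (Finset.mem_range.mp hi), sub_self, zero_mul]
  rw [← abs_of_pos (pow_pos (one_pos.trans hq) N), ← abs_mul, ← radixSum_sub hq ha hb,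
    pow_mul_radixSum hq hsub, hzero, zero_add]
  exact abs_radixSum_le hq fun i => hsub (i + N)

end RadixSum

section IntegerDigits

variable {q C : ℕ} {b : ℕ → ℤ} {r : ℚ}

lemma exists_int_pow_mul_radixSum_eq (hq : 1 < q) (hb : ∀ i, |b i| ≤ C) (k : ℕ) :
    ∃ z : ℤ, (q : ℝ) ^ k * radixSum q (fun i => b i) = z + radixSum q fun i => b (i + k) :=
  ⟨∑ i ∈ Finset.range k, b i * (q : ℤ) ^ (k - 1 - i), by
    push_cast
    exact pow_mul_radixSum (C := C) (mod_cast hq) (fun i => mod_cast hb i) k⟩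

lemma exists_int_den_mul_radixSum_shift_eq (hq : 1 < q) (hb : ∀ i, |b i| ≤ C)
    (hr : radixSum q (fun i => b i) = r) (k : ℕ) :
    ∃ y : ℤ, r.den * radixSum q (fun i => b (i + k)) = y ∧
      (y : ZMod r.den) = (q : ZMod r.den) ^ k * r.num := by
  obtain ⟨z, hz⟩ := exists_int_pow_mul_radixSum_eq hq hb k
  have hnum : (r.den : ℝ) * r = r.num := mod_cast Rat.den_mul_eq_num r
  refine ⟨q ^ k * r.num - r.den * z, ?_, by simp⟩
  rw [hr] at hz
  push_cast
  linear_combination (-(r.den : ℝ)) * hz + (q : ℝ) ^ k * hnum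

lemma pow_eq_pow_of_radixSum_shift_eq (hq : 1 < q) (hb : ∀ i, |b i| ≤ C)
    (hr : radixSum q (fun i => b i) = r) {j k : ℕ}
    (hjk : radixSum q (fun i => b (i + j)) = radixSum q fun i => b (i + k)) :
    (q : ZMod r.den) ^ j = (q : ZMod r.den) ^ k := by
  obtain ⟨y, hy, hyq⟩ := exists_int_den_mul_radixSum_shift_eq hq hb hr j
  obtain ⟨y', hy', hyq'⟩ := exists_int_den_mul_radixSum_shift_eq hq hb hr k
  have hyy' : y = y' := by rw [hjk, hy'] at hy; exact_mod_cast hy.symm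
  have hunit : IsUnit (r.num : ZMod r.den) := by
    rw [ZMod.coe_int_isUnit_iff_isCoprime, isCoprime_comm, Int.isCoprime_iff_nat_coprime]
    exact r.reduced
  exact hunit.mul_right_cancel (by rw [← hyq, ← hyq', hyy'])

lemma radixSum_shift_eq_of_forall_lt_eq (hq : 1 < q) (hb : ∀ i, |b i| ≤ C)
    (hr : radixSum q (fun i => b i) = r) {j k N : ℕ} (hN : 2 * C * r.den < q ^ N)
    (hjk : ∀ i < N, b (i + j) = b (i + k)) :
    radixSum q (fun i => b (i + j)) = radixSum q fun i => b (i + k) := by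
  obtain ⟨y, hy, -⟩ := exists_int_den_mul_radixSum_shift_eq hq hb hr j
  obtain ⟨y', hy', -⟩ := exists_int_den_mul_radixSum_shift_eq hq hb hr k
  have hden : (0 : ℝ) < r.den := mod_cast r.den_pos
  have hq' : (2 : ℝ) ≤ q := mod_cast hq
  set X := radixSum q fun i => (b (i + j) : ℝ)
  set Y := radixSum q fun i => (b (i + k) : ℝ)
  have hclose : (q : ℝ) ^ N * |X - Y| ≤ 2 * C :=
    (pow_mul_abs_radixSum_sub_le (C := C) (by linarith) (fun i => mod_cast hb (i + j))
      (fun i => mod_cast hb (i + k)) fun i hi => by rw [hjk i hi]).trans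
      (div_le_self (by positivity) (by linarith))
  have hsmall : |(y : ℝ) - y'| < 1 := by
    rw [← hy, ← hy', ← mul_sub, abs_mul, abs_of_pos hden]
    refine lt_of_mul_lt_mul_left ?_ (by positivity : (0 : ℝ) ≤ (q : ℝ) ^ N)
    calc (q : ℝ) ^ N * (r.den * |X - Y|) = (q : ℝ) ^ N * |X - Y| * r.den := by ring
      _ ≤ 2 * C * r.den := by gcongr
      _ < (q : ℝ) ^ N * 1 := by rw [mul_one]; exact_mod_cast hN
  have hyy' : y = y' := sub_eq_zero.mp (Int.abs_lt_one_iff.mp (by exact_mod_cast hsmall))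
  exact mul_left_cancel₀ hden.ne' (by rw [hy, hy', hyy'])

lemma orderOf_le_card_pow {B : Finset ℤ} (hq : 1 < q) (hB : ∀ z ∈ B, |z| ≤ C)
    (hb : ∀ i, b i ∈ B) (hr : radixSum q (fun i => b i) = r) {N : ℕ}
    (hN : 2 * C * r.den < q ^ N) : orderOf (q : ZMod r.den) ≤ B.card ^ N := by
  have hbC : ∀ i, |b i| ≤ C := fun i => hB _ (hb i)
  let word : Fin (orderOf (q : ZMod r.den)) → Fin N → B := fun k i => ⟨b (i + k), hb _⟩
  have hinj : word.Injective := fun j k hjk => by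
    have hdigits : ∀ i < N, b (i + j) = b (i + k) := fun i hi =>
      congrArg Subtype.val (congrFun hjk ⟨i, hi⟩)
    have hshift := radixSum_shift_eq_of_forall_lt_eq hq hbC hr hN hdigits
    exact Fin.ext (pow_injOn_Iio_orderOf j.isLt k.isLt
      (pow_eq_pow_of_radixSum_shift_eq hq hbC hr hshift))
  simpa using Fintype.card_le_of_injective word hinj

lemma exists_forall_den_le {p : ℕ} (hq : 1 < q) (hpq : p.Coprime q) (B : Finset ℤ)
    (hBq : B.card < q) :
    ∃ D : ℕ, ∀ (b : ℕ → ℤ) (r : ℚ) (n : ℕ), (∀ i, b i ∈ B) → r.den ∣ p ^ n →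
      radixSum q (fun i => b i) = r → r.den ≤ D := by
  obtain ⟨C, hC⟩ := (B.image Int.natAbs).exists_le
  have hBC : ∀ z ∈ B, |z| ≤ C := fun z hz => by
    rw [Int.abs_eq_natAbs]
    exact_mod_cast hC _ (Finset.mem_image_of_mem _ hz)
  obtain ⟨D, hD⟩ := exists_forall_le_of_forall_le_mul_pow hq hBq (Nat.succ_pos (2 * C))
    (q ^ (p ^ 2).totient - 1)
  refine ⟨D, fun b r n hb hrn hr => hD _ fun N hN => ?_⟩
  have hN' : 2 * C * r.den < q ^ N := (Nat.mul_le_mul_right _ (Nat.le_succ _)).trans_lt hN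
  exact (le_mul_orderOf_of_dvd_pow hq hpq hrn).trans
    (Nat.mul_le_mul_left _ (orderOf_le_card_pow hq hBC hb hr hN'))

end IntegerDigits

section Dset

variable {p : ℕ} {x y : ℝ}

lemma sub_mem_Dset (hp : p ≠ 0) (hx : x ∈ Dset p) (hy : y ∈ Dset p) : x - y ∈ Dset p := by
  obtain ⟨n, hn, m, rfl⟩ := hx
  obtain ⟨n', -, m', rfl⟩ := hy
  refine ⟨n + n', hn.trans (Nat.le_add_right n n'), m * p ^ n' - m' * p ^ n, ?_⟩
  push_cast
  rw [pow_add]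
  field_simp

lemma intCast_mul_mem_Dset (c : ℤ) (hx : x ∈ Dset p) : c * x ∈ Dset p := by
  obtain ⟨n, hn, m, rfl⟩ := hx
  exact ⟨n, hn, c * m, by push_cast; ring⟩

lemma exists_rat_eq_of_mem_Dset (hx : x ∈ Dset p) : ∃ (r : ℚ) (n : ℕ), r.den ∣ p ^ n ∧ x = r := by
  obtain ⟨n, -, m, rfl⟩ := hx
  refine ⟨Rat.divInt m (p ^ n : ℕ), n, mod_cast Rat.den_dvd m (p ^ n : ℕ), ?_⟩
  rw [Rat.divInt_eq_div]
  push_cast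
  rfl

end Dset

section Kset

variable {q : ℕ} {A A' : Finset ℚ} {x y : ℝ}

lemma mem_Kset_iff :
    x ∈ Kset q A ↔ ∃ a : ℕ → ℚ, (∀ i, a i ∈ A) ∧ x = radixSum q fun i => a i :=
  Iff.rfl

lemma exists_forall_mem_Kset_abs_le (hq : 1 < q) (A : Finset ℚ) :
    ∃ C : ℝ, ∀ x ∈ Kset q A, |x| ≤ C := by
  obtain ⟨C, hC⟩ := exists_forall_abs_ratCast_le A
  refine ⟨C / (q - 1), fun x hx => ?_⟩
  obtain ⟨a, ha, rfl⟩ := mem_Kset_iff.mp hx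
  exact abs_radixSum_le (mod_cast hq) fun i => hC _ (ha i)

lemma sub_mem_Kset (hq : 1 < q) (hx : x ∈ Kset q A) (hy : y ∈ Kset q A') :
    x - y ∈ Kset q (A - A') := by
  obtain ⟨a, ha, rfl⟩ := mem_Kset_iff.mp hx
  obtain ⟨a', ha', rfl⟩ := mem_Kset_iff.mp hy
  obtain ⟨C, hC⟩ := exists_forall_abs_ratCast_le A
  obtain ⟨C', hC'⟩ := exists_forall_abs_ratCast_le A'
  refine mem_Kset_iff.mpr ⟨fun i => a i - a' i, fun i => Finset.sub_mem_sub (ha i) (ha' i), ?_⟩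
  push_cast
  exact (radixSum_sub (mod_cast hq) (fun i => hC _ (ha i)) fun i => hC' _ (ha' i)).symm

lemma ratCast_mul_mem_Kset (c : ℚ) (hx : x ∈ Kset q A) : c * x ∈ Kset q (c • A) := by
  obtain ⟨a, ha, rfl⟩ := mem_Kset_iff.mp hx
  refine mem_Kset_iff.mpr ⟨fun i => c * a i, fun i => Finset.smul_mem_smul_finset (ha i), ?_⟩
  push_cast
  exact (radixSum_const_mul _ _ _).symm

lemma exists_int_digits_of_mem_Kset_image {B : Finset ℤ} (hx : x ∈ Kset q (B.image (↑))) :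
    ∃ b : ℕ → ℤ, (∀ i, b i ∈ B) ∧ x = radixSum q fun i => b i := by
  obtain ⟨a, ha, rfl⟩ := mem_Kset_iff.mp hx
  choose b hb hba using fun i => Finset.mem_image.mp (ha i)
  exact ⟨b, hb, by simp only [← hba, Rat.cast_intCast]⟩

end Kset

section Finiteness

variable {p q : ℕ}

lemma finite_Dset_inter_Kset_image_intCast (hq : 1 < q) (hpq : p.Coprime q) (B : Finset ℤ)
    (hB : B.card < q) : (Dset p ∩ Kset q (B.image (↑))).Finite := by
  obtain ⟨D, hD⟩ := exists_forall_den_le hq hpq B hB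
  obtain ⟨C, hC⟩ := exists_forall_mem_Kset_abs_le hq (B.image (↑))
  refine ((finite_setOf_den_le_abs_le D C).image (↑)).subset fun x ⟨hxD, hxK⟩ => ?_
  obtain ⟨r, n, hrn, rfl⟩ := exists_rat_eq_of_mem_Dset hxD
  obtain ⟨b, hb, hrb⟩ := exists_int_digits_of_mem_Kset_image hxK
  exact ⟨r, ⟨hD b r n hb hrn hrb.symm, hC _ hxK⟩, rfl⟩

theorem finite_Dset_inter_Kset (hq : 1 < q) (hpq : p.Coprime q) (A : Finset ℚ)
    (hA : A.card < q) : (Dset p ∩ Kset q A).Finite := by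
  obtain ⟨c, hc, B, hB⟩ := exists_ne_zero_image_intCast_eq_smul A
  have hBcard : B.card < q := by
    rw [← Finset.card_image_of_injective B (Int.cast_injective (α := ℚ)), hB]
    exact Finset.card_smul_finset_le.trans_lt hA
  have hfin := finite_Dset_inter_Kset_image_intCast hq hpq B hBcard
  rw [hB] at hfin
  refine Set.Finite.of_injOn (f := fun x : ℝ => c * x) (fun x hx => ?_)
    (mul_right_injective₀ (Int.cast_ne_zero.mpr hc)).injOn hfin
  exact ⟨intCast_mul_mem_Dset c hx.1, by simpa using ratCast_mul_mem_Kset c hx.2⟩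

end Finiteness

theorem uniform_bound_of_small_difference_set (q : ℕ) (hq : 3 ≤ q)
    (A : Finset ℚ) (hA : 2 ≤ A.card) (hAA : (A - A).card < q)
    (p : ℕ) (hp : 2 ≤ p) (hpq : Nat.Coprime p q) :
    ∃ M : ℕ, ∀ α : ℝ,
      (((fun x : ℝ => x + α) '' Dset p) ∩ Kset q A).Finite ∧
      (((fun x : ℝ => x + α) '' Dset p) ∩ Kset q A).ncard ≤ M := by
  have hq₁ : 1 < q := by omega
  have hfin : (Dset p ∩ Kset q (A - A)).Finite := finite_Dset_inter_Kset hq₁ hpq (A - A) hAA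
  refine ⟨(Dset p ∩ Kset q (A - A)).ncard, fun α => finite_and_ncard_le_of_sub_subset hfin ?_⟩
  rintro _ ⟨_, ⟨⟨x, hx, rfl⟩, hxK⟩, _, ⟨⟨y, hy, rfl⟩, hyK⟩, rfl⟩
  refine ⟨?_, sub_mem_Kset hq₁ hxK hyK⟩
  simpa using sub_mem_Dset (by omega) hx hy
end
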